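/- Let η > 0, λ > 0, ρ > 0, P_u^{(m)} > 0 and a > 0, and set R_m = (P_u^{(m)}/ρ)^{1/η}. If R has density f_R(r) = 2πλ r exp(−πλ r²)/(1 − exp(−πλ R_m²)) on [0, R_m], then the a-th moment of the transmit power P_u = ρ R^η satisfies ∫₀^{R_m} (ρ r^η)^a f_R(r) dr = ρ^a · γ(aη/2 + 1, πλ R_m²) / ((πλ)^{aη/2} · (1 − exp(−πλ R_m²))), where γ(s, X) = ∫₀^X t^{s−1} e^{−t} dt is the lower incomplete gamma function. -/

import Mathlib

open Real MeasureTheory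

/-- The lower incomplete gamma function `γ(s, X) = ∫₀^X t^{s−1} e^{−t} dt`. -/
noncomputable def lowerIncGamma (s X : ℝ) : ℝ :=
  ∫ t in (0:ℝ)..X, t ^ (s - 1) * Real.exp (-t)

section IncompleteGamma

variable {p q b R : ℝ}

theorem lowerIncGamma_mul_rpow (s : ℝ) (hp : 0 < p) (hb : 0 ≤ b) (hR : 0 ≤ R) :
    lowerIncGamma s (b * R ^ p) =
      ∫ x in (0 : ℝ)..R, (b * x ^ p) ^ (s - 1) * exp (-(b * x ^ p)) *
        (b * (p * x ^ (p - 1))) := by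
  have hcont : Continuous fun x : ℝ ↦ b * x ^ p :=
    continuous_const.mul (continuous_rpow_const hp.le)
  have hpos : ∀ x ∈ Set.Ioo (min 0 R) (max 0 R), 0 < x := fun x hx ↦ by
    rw [min_eq_left hR] at hx
    exact hx.1
  have change_of_variables := intervalIntegral.integral_comp_mul_deriv_of_deriv_nonneg
    (g := fun t ↦ t ^ (s - 1) * exp (-t)) hcont.continuousOn
    (fun x hx ↦ (hasDerivAt_rpow_const (Or.inl (hpos x hx).ne')).const_mul b)
    (fun x hx ↦ mul_nonneg hb (mul_nonneg hp.le (rpow_nonneg (hpos x hx).le _)))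
  simpa only [lowerIncGamma, Function.comp_apply, zero_rpow hp.ne', mul_zero]
    using change_of_variables.symm

theorem mul_rpow_rpow_sub_one_mul_deriv (s p : ℝ) (hb : 0 < b) {x : ℝ} (hx : 0 < x) :
    (b * x ^ p) ^ (s - 1) * (b * (p * x ^ (p - 1))) = b ^ s * p * x ^ (p * s - 1) := by
  have hb_pow : b ^ (s - 1) * b = b ^ s := by
    rw [rpow_sub_one hb.ne', div_mul_cancel₀ _ hb.ne']
  have hx_pow : (x ^ p) ^ (s - 1) * x ^ (p - 1) = x ^ (p * s - 1) := by
    rw [← rpow_mul hx.le, ← rpow_add hx]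
    ring_nf
  rw [mul_rpow hb.le (rpow_nonneg hx.le p), ← hb_pow, ← hx_pow]
  ring

-- For `q ≤ -1` and `0 < R` both integrals diverge, so both sides are `0` by convention.
theorem integral_rpow_mul_exp_neg_mul_rpow_eq_lowerIncGamma
    (hp : 0 < p) (hb : 0 < b) (hR : 0 ≤ R) :
    ∫ x in (0 : ℝ)..R, x ^ q * exp (-b * x ^ p) =
      b ^ (-(q + 1) / p) * (1 / p) * lowerIncGamma ((q + 1) / p) (b * R ^ p) := by
  have hexponent : p * ((q + 1) / p) - 1 = q := by
    rw [mul_div_cancel₀ _ hp.ne', add_sub_cancel_right]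
  have hgamma : lowerIncGamma ((q + 1) / p) (b * R ^ p) =
      b ^ ((q + 1) / p) * p * ∫ x in (0 : ℝ)..R, x ^ q * exp (-b * x ^ p) := by
    rw [lowerIncGamma_mul_rpow _ hp hb.le hR, ← intervalIntegral.integral_const_mul]
    refine intervalIntegral.integral_congr_Ioo_of_le hR fun x hx ↦ ?_
    simp only [neg_mul]
    rw [mul_right_comm, mul_rpow_rpow_sub_one_mul_deriv _ _ hb hx.1, hexponent, mul_assoc]
  rw [hgamma, neg_div, rpow_neg hb.le]
  field_simp

theorem intervalIntegrable_rpow_mul_exp_neg_mul_rpow (hp : 0 ≤ p) (hq : -1 < q) (u v : ℝ) :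
    IntervalIntegrable (fun x : ℝ ↦ x ^ q * exp (-b * x ^ p)) volume u v :=
  (intervalIntegral.intervalIntegrable_rpow' hq).mul_continuousOn
    (continuous_const.mul (continuous_rpow_const hp)).rexp.continuousOn

end IncompleteGamma

/-- The density `f_R` of the distance between an active user and its serving base station, in a
Poisson network of intensity `lam` where only users within distance `R` of their station are active.
The formula is not cut off outside `[0, R]`; it is meant to be integrated over that interval. -/
noncomputable def servingDistancePDF (lam R r : ℝ) : ℝ :=
  2 * π * lam * r * exp (-(π * lam * r ^ 2)) / (1 - exp (-(π * lam * R ^ 2)))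

section ServingDistance

variable {lam R q : ℝ}

theorem rpow_mul_servingDistancePDF {r : ℝ} (hr : 0 < r) :
    r ^ q * servingDistancePDF lam R r =
      2 * (π * lam) / (1 - exp (-(π * lam * R ^ 2))) *
        (r ^ (q + 1) * exp (-(π * lam) * r ^ (2 : ℝ))) := by
  rw [servingDistancePDF, rpow_add_one hr.ne', rpow_two, neg_mul]
  ring

theorem intervalIntegrable_rpow_mul_servingDistancePDF (hR : 0 ≤ R) (hq : -2 < q) :
    IntervalIntegrable (fun r ↦ r ^ q * servingDistancePDF lam R r) volume 0 R := by
  refine ((intervalIntegrable_rpow_mul_exp_neg_mul_rpow zero_le_two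
    (by linarith : -1 < q + 1) 0 R).const_mul _).congr_uIoo fun r hr ↦
      (rpow_mul_servingDistancePDF ?_).symm
  rw [Set.uIoo_of_le hR] at hr
  exact hr.1

theorem integral_rpow_mul_servingDistancePDF (hlam : 0 < lam) (hR : 0 ≤ R) :
    ∫ r in (0 : ℝ)..R, r ^ q * servingDistancePDF lam R r =
      lowerIncGamma (q / 2 + 1) (π * lam * R ^ 2) /
        ((π * lam) ^ (q / 2) * (1 - exp (-(π * lam * R ^ 2)))) := by
  have hc : 0 < π * lam := by positivity
  have hexponent : (q + 1 + 1) / 2 = q / 2 + 1 := by ring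
  rw [intervalIntegral.integral_congr_Ioo_of_le hR fun r hr ↦ rpow_mul_servingDistancePDF hr.1,
    intervalIntegral.integral_const_mul,
    integral_rpow_mul_exp_neg_mul_rpow_eq_lowerIncGamma two_pos hc hR,
    neg_div, hexponent, rpow_neg hc.le, rpow_add_one hc.ne', rpow_two]
  field_simp

end ServingDistance

theorem mul_rpow_rpow {ρ r : ℝ} (hρ : 0 ≤ ρ) (hr : 0 ≤ r) (η a : ℝ) :
    (ρ * r ^ η) ^ a = ρ ^ a * r ^ (a * η) := by
  rw [mul_rpow hρ (rpow_nonneg hr η), ← rpow_mul hr, mul_comm η a]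

theorem stmt1_general {η lam ρ a R : ℝ} (hlam : 0 < lam) (hρ : 0 < ρ) (hR : 0 < R)
    (haη : -2 < a * η) :
    IntervalIntegrable (fun r ↦ (ρ * r ^ η) ^ a * servingDistancePDF lam R r) volume 0 R ∧
      ∫ r in (0 : ℝ)..R, (ρ * r ^ η) ^ a * servingDistancePDF lam R r =
        ρ ^ a * lowerIncGamma (a * η / 2 + 1) (π * lam * R ^ 2) /
          ((π * lam) ^ (a * η / 2) * (1 - exp (-(π * lam * R ^ 2)))) := by
  have hpower : Set.EqOn (fun r ↦ ρ ^ a * (r ^ (a * η) * servingDistancePDF lam R r))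
      (fun r ↦ (ρ * r ^ η) ^ a * servingDistancePDF lam R r) (Set.uIoo 0 R) := by
    intro r hr
    rw [Set.uIoo_of_le hR.le] at hr
    simp only [mul_rpow_rpow hρ.le hr.1.le η a, mul_assoc (ρ ^ a)]
  constructor
  · exact ((intervalIntegrable_rpow_mul_servingDistancePDF hR.le haη).const_mul _).congr_uIoo hpower
  · rw [← intervalIntegral.integral_congr_uIoo hpower, intervalIntegral.integral_const_mul,
      integral_rpow_mul_servingDistancePDF hlam hR.le, mul_div_assoc (ρ ^ a)]

/-- a-th moment of the uplink transmit power `P_u = ρ R^η` under the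
truncated channel inversion power control distance density. -/
theorem stmt1 (η lam ρ Pm a : ℝ) (hη : 0 < η) (hlam : 0 < lam) (hρ : 0 < ρ)
    (hPm : 0 < Pm) (ha : 0 < a) (Rm : ℝ) (hRm : Rm = (Pm / ρ) ^ (1 / η)) :
    (∫ r in (0:ℝ)..Rm,
        (ρ * r ^ η) ^ a *
          (2 * π * lam * r * Real.exp (-(π * lam * r ^ 2)) /
            (1 - Real.exp (-(π * lam * Rm ^ 2)))))
      = ρ ^ a * lowerIncGamma (a * η / 2 + 1) (π * lam * Rm ^ 2) /
          ((π * lam) ^ (a * η / 2) * (1 - Real.exp (-(π * lam * Rm ^ 2)))) := by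
  have hRm_pos : 0 < Rm := hRm ▸ rpow_pos_of_pos (div_pos hPm hρ) _
  exact (stmt1_general hlam hρ hRm_pos (by linarith [mul_pos ha hη])).2
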